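/- arXiv:2305.13350 — 2 statements merged into one kernel-verified Lean document; each statement's English description precedes it below -/
import Mathlib

section
/- Let p > 0 and ρ > 0, and define the kernels g^e_p(x,ρ) = ρ^{p+1} Λ^e_p(xρ) and g^o_p(x,ρ) = ρ^{p+1} Λ^o_p(xρ). Then there exist nonzero real constants c and d, independent of ρ and ω, such that for all real ω: 𝓕(g^e_p(·,ρ))(ω) = c |ω|^p e^{-ω²/(2ρ²)} and 𝓕(g^o_p(·,ρ))(ω) = i · d · sign(ω) |ω|^p e^{-ω²/(2ρ²)}. Moreover, for every f ∈ L¹(ℝ), the convolutions φ^e_p(·,ρ) = f * g^e_p(·,ρ) and φ^o_p(·,ρ) = f * g^o_p(·,ρ) satisfy 𝓕(φ^e_p(·,ρ))(ω) = c |ω|^p e^{-ω²/(2ρ²)} 𝓕f(ω) and 𝓕(φ^o_p(·,ρ))(ω) = i · d · sign(ω) |ω|^p e^{-ω²/(2ρ²)} 𝓕f(ω). -/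
open MeasureTheory Filter Real

/-- The even kernel function `Λ^e_p(x)`. -/
noncomputable def LamE (p x : ℝ) : ℝ :=
  (1 / Real.sqrt (2 * Real.pi)) *
    ∑' n : ℕ, (-1 : ℝ) ^ n * (∏ k ∈ Finset.range n, (p + 2 * (k : ℝ) + 1)) * x ^ (2 * n) /
      (Nat.factorial (2 * n) : ℝ)

/-- The odd kernel function `Λ^o_p(x)`. -/
noncomputable def LamO (p x : ℝ) : ℝ :=
  (1 / Real.sqrt (2 * Real.pi)) *
    ∑' n : ℕ, (-1 : ℝ) ^ n * (∏ k ∈ Finset.range n, (p + 2 * ((k : ℝ) + 1))) * x ^ (2 * n + 1) /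
      (Nat.factorial (2 * n + 1) : ℝ)

/-!
Put `g_p(x) = ∫₀^∞ ω^p e^{-ω²/2} e^{ixω} dω`. Expanding `e^{ixω}` and integrating term by term
against the half-line Gaussian moments `m_p`, which satisfy `m_{p+2} = (p + 1) m_p`, gives
`g_p = √(2π) (m_p Λ^e_p + i m_{p+1} Λ^o_p)`. So `Λ^e_p` and `Λ^o_p` are combinations of `g_p(x)` and
`g_p(-x)`, and once `g_p` is integrable, Fourier inversion identifies its transform as
`2π ω₊^p e^{-ω²/2}`.

Integrability rests on the identity `i x g_p = g_{p+1} - p g_{p-1}` (integration by parts), which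
gains one power of decay. The worst term is `g_s` with `-1 < s ≤ 0`: its weight is at most `ω^s`
below `1/x` and decreasing above, so a second integration by parts on `(1/x, ∞)` gives
`g_s = O(x^{-(s+1)})`. Hence `g_p = O(x^{-(1 + min(p, 1))})` for `p > 0`.
-/

section AngularFourier

open FourierTransform
open Complex (I)

/-- The Fourier transform `∫ f(x) e^{-iωx} dx` in the angular-frequency normalisation, which differs
from Mathlib's `𝓕` by the factor `2π` in the frequency. -/
noncomputable def angularFourier (f : ℝ → ℂ) (ω : ℝ) : ℂ :=
  ∫ x : ℝ, f x * Complex.exp (-(I * ω * x))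

theorem angularFourier_eq_fourier (f : ℝ → ℂ) (ω : ℝ) :
    angularFourier f ω = 𝓕 f (ω / (2 * π)) := by
  rw [angularFourier, Real.fourier_eq']
  congr with x
  have hphase : ((-2 * π * inner ℝ x (ω / (2 * π)) : ℝ) : ℂ) * I = -(I * ω * x) := by
    rw [RCLike.inner_apply, conj_trivial]
    push_cast
    field_simp
  rw [hphase, smul_eq_mul, mul_comm]

theorem integrable_mul_cexp_I_mul {μ : Measure ℝ} {h : ℝ → ℂ} (hh : Integrable h μ) (x : ℝ) :
    Integrable (fun ω : ℝ => h ω * Complex.exp (I * x * ω)) μ :=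
  hh.mul_bdd (c := 1) (by fun_prop) (ae_of_all _ fun ω => by simp [Complex.norm_exp])

theorem integrable_mul_cexp_neg_I_mul {f : ℝ → ℂ} (hf : Integrable f) (ω : ℝ) :
    Integrable fun x : ℝ => f x * Complex.exp (-(I * ω * x)) := by
  simpa only [Complex.ofReal_neg, mul_neg, neg_mul] using integrable_mul_cexp_I_mul hf (-ω)

theorem angularFourier_add {f g : ℝ → ℂ} (hf : Integrable f) (hg : Integrable g) (ω : ℝ) :
    angularFourier (fun x => f x + g x) ω = angularFourier f ω + angularFourier g ω := by
  simp only [angularFourier, add_mul]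
  exact integral_add (integrable_mul_cexp_neg_I_mul hf ω) (integrable_mul_cexp_neg_I_mul hg ω)

theorem angularFourier_const_mul (a : ℂ) (f : ℝ → ℂ) (ω : ℝ) :
    angularFourier (fun x => a * f x) ω = a * angularFourier f ω := by
  simp only [angularFourier, mul_assoc, integral_const_mul]

theorem angularFourier_comp_mul_right (f : ℝ → ℂ) {ρ : ℝ} (hρ : ρ ≠ 0) (ω : ℝ) :
    angularFourier (fun x => f (x * ρ)) ω = (|ρ|⁻¹ : ℝ) * angularFourier f (ω / ρ) := by
  have hphase (x : ℝ) : I * ω * x = I * (ω / ρ : ℝ) * (x * ρ : ℝ) := by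
    have : (ρ : ℂ) ≠ 0 := Complex.ofReal_ne_zero.2 hρ
    push_cast
    field_simp
  simp only [angularFourier, hphase]
  rw [Measure.integral_comp_mul_right (fun x => f x * Complex.exp (-(I * (ω / ρ : ℝ) * x))) ρ,
    Complex.real_smul, abs_inv]

theorem angularFourier_comp_neg (f : ℝ → ℂ) (ω : ℝ) :
    angularFourier (fun x => f (-x)) ω = angularFourier f (-ω) := by
  simpa [div_neg] using angularFourier_comp_mul_right f (ρ := -1) (by norm_num) ω

theorem angularFourier_convolution {f k : ℝ → ℂ} (hf : Integrable f) (hk : Integrable k) (ω : ℝ) :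
    angularFourier (fun x => ∫ v, f v * k (x - v)) ω =
      angularFourier k ω * angularFourier f ω := by
  rw [mul_comm]
  simp only [angularFourier_eq_fourier]
  exact Real.fourier_mul_convolution_eq hf hk _

theorem angularFourier_inversion {a : ℝ → ℂ} (ha : Continuous a) (hai : Integrable a)
    (htransform : Integrable fun x => angularFourier a (-x)) (ω : ℝ) :
    angularFourier (fun x => angularFourier a (-x)) ω = 2 * π * a ω := by
  have htwo_pi : (2 * π)⁻¹ ≠ 0 := inv_ne_zero Real.two_pi_pos.ne'
  have hinv (x : ℝ) : angularFourier a (-x) = 𝓕⁻ a (x * (2 * π)⁻¹) := by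
    rw [angularFourier_eq_fourier, Real.fourierInv_eq_fourier_neg, neg_div, div_eq_mul_inv]
  have hfourier : Integrable (𝓕 a) := by
    have := (htransform.comp_mul_right' (R := -(2 * π)) (neg_ne_zero.2 Real.two_pi_pos.ne'))
    refine this.congr (ae_of_all _ fun x => ?_)
    simp [angularFourier_eq_fourier, Real.pi_ne_zero]
  simp only [hinv]
  rw [angularFourier_comp_mul_right _ htwo_pi, angularFourier_eq_fourier,
    ha.fourier_fourierInv_eq hai hfourier, abs_of_pos (inv_pos.2 Real.two_pi_pos), inv_inv,
    div_inv_eq_mul, mul_div_cancel_right₀ _ Real.two_pi_pos.ne']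
  push_cast
  rfl

end AngularFourier

section Oscillatory

open Set Topology
open Complex (I)

theorem norm_mul_cexp_I_mul (z : ℂ) (x ω : ℝ) : ‖z * Complex.exp (I * x * ω)‖ = ‖z‖ := by
  simp [Complex.norm_exp]

theorem I_mul_integral_Ioi_mul_cexp {h h' : ℝ → ℂ} {a : ℝ} (x : ℝ)
    (hcont : ContinuousWithinAt h (Ici a) a) (hderiv : ∀ ω ∈ Ioi a, HasDerivAt h (h' ω) ω)
    (hint : IntegrableOn h (Ioi a)) (hint' : IntegrableOn h' (Ioi a)) :
    I * x * ∫ ω in Ioi a, h ω * Complex.exp (I * x * ω) =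
      -(h a * Complex.exp (I * x * a)) - ∫ ω in Ioi a, h' ω * Complex.exp (I * x * ω) := by
  have hwave (ω : ℝ) : HasDerivAt (fun ω : ℝ => Complex.exp (I * x * ω))
      (Complex.exp (I * x * ω) * (I * x)) ω := by
    simpa using ((Complex.ofRealCLM.hasDerivAt (x := ω)).const_mul (I * (x : ℂ))).cexp
  have hlim : Tendsto (fun ω : ℝ => h ω * Complex.exp (I * x * ω)) atTop (𝓝 0) :=
    squeeze_zero_norm (fun ω => (norm_mul_cexp_I_mul _ x ω).le)
      (by simpa using (tendsto_zero_of_hasDerivAt_of_integrableOn_Ioi hderiv hint' hint).norm)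
  have hinit : Tendsto (fun ω : ℝ => h ω * Complex.exp (I * x * ω)) (𝓝[>] a)
      (𝓝 (h a * Complex.exp (I * x * a))) :=
    (hcont.mono Ioi_subset_Ici_self).mul (hwave a).continuousAt.continuousWithinAt
  have hint_mul :
      IntegrableOn (fun ω : ℝ => h ω * (Complex.exp (I * x * ω) * (I * x))) (Ioi a) := by
    simpa only [IntegrableOn, mul_assoc] using (integrable_mul_cexp_I_mul hint x).mul_const (I * x)
  have hparts := integral_Ioi_mul_deriv_eq_deriv_mul hderiv (fun ω _ => hwave ω) hint_mul
    (integrable_mul_cexp_I_mul hint' x) hinit hlim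
  rw [zero_sub] at hparts
  rw [← hparts, mul_comm, ← integral_mul_const]
  simp only [mul_assoc]

theorem norm_integral_Ioi_mul_cexp_le_of_deriv_nonpos {h h' : ℝ → ℝ} {a x : ℝ} (hx : x ≠ 0)
    (hderiv : ∀ ω ∈ Ici a, HasDerivAt h (h' ω) ω) (hneg : ∀ ω ∈ Ioi a, h' ω ≤ 0)
    (hint : IntegrableOn h (Ioi a)) (hlim : Tendsto h atTop (𝓝 0)) :
    ‖∫ ω in Ioi a, (h ω : ℂ) * Complex.exp (I * x * ω)‖ ≤ 2 * h a / |x| := by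
  have hint' : IntegrableOn h' (Ioi a) := integrableOn_Ioi_deriv_of_nonpos' hderiv hneg hlim
  have htotal : ∫ ω in Ioi a, -h' ω = h a := by
    rw [integral_neg, integral_Ioi_of_hasDerivAt_of_nonpos' hderiv hneg hlim, zero_sub, neg_neg]
  have hnonneg : 0 ≤ h a :=
    htotal ▸ setIntegral_nonneg measurableSet_Ioi fun ω hω => neg_nonneg.2 (hneg ω hω)
  have hderivTerm : ‖∫ ω in Ioi a, (h' ω : ℂ) * Complex.exp (I * x * ω)‖ ≤ h a := by
    rw [← htotal]
    refine norm_integral_le_of_norm_le hint'.neg ?_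
    filter_upwards [ae_restrict_mem measurableSet_Ioi] with ω hω
    rw [norm_mul_cexp_I_mul, Complex.norm_real, Real.norm_of_nonpos (hneg ω hω)]
  have hparts := I_mul_integral_Ioi_mul_cexp (h := fun ω => (h ω : ℂ)) x
    (Complex.continuous_ofReal.continuousAt.comp_continuousWithinAt
      (hderiv a self_mem_Ici).continuousAt.continuousWithinAt)
    (fun ω hω => (hderiv ω (Ioi_subset_Ici_self hω)).ofReal_comp) hint.ofReal hint'.ofReal
  rw [le_div_iff₀ (abs_pos.2 hx), mul_comm]
  calc |x| * ‖∫ ω in Ioi a, (h ω : ℂ) * Complex.exp (I * x * ω)‖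
      = ‖I * x * ∫ ω in Ioi a, (h ω : ℂ) * Complex.exp (I * x * ω)‖ := by simp
    _ = ‖-(h a * Complex.exp (I * x * a)) -
          ∫ ω in Ioi a, (h' ω : ℂ) * Complex.exp (I * x * ω)‖ := by
      rw [hparts]
    _ ≤ ‖(h a : ℂ) * Complex.exp (I * x * a)‖ + h a := by
      grw [norm_sub_le, norm_neg, hderivTerm]
    _ = 2 * h a := by
      rw [norm_mul_cexp_I_mul, Complex.norm_real, Real.norm_of_nonneg hnonneg, two_mul]

end Oscillatory

section GaussPow

open Set Topology

/-- The weight `ω ^ p * e^{-ω²/2}`, the positive-frequency half of both Fourier transforms. It is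
only meant for `0 ≤ ω`; for negative `ω` it inherits the conventions of `Real.rpow`. -/
noncomputable def gaussPow (p ω : ℝ) : ℝ := ω ^ p * Real.exp (-(1 / 2) * ω ^ 2)

/-- The `p`-th absolute half-line moment `∫₀^∞ ω ^ p * e^{-ω²/2} dω` of the Gaussian. -/
noncomputable def gaussMoment (p : ℝ) : ℝ := ∫ ω in Ioi 0, gaussPow p ω

variable {p ω : ℝ}

theorem measurable_gaussPow (p : ℝ) : Measurable (gaussPow p) := by
  unfold gaussPow
  fun_prop

theorem gaussPow_nonneg (p : ℝ) (hω : 0 ≤ ω) : 0 ≤ gaussPow p ω := by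
  unfold gaussPow
  positivity

theorem gaussPow_le_rpow (p : ℝ) (hω : 0 ≤ ω) : gaussPow p ω ≤ ω ^ p :=
  mul_le_of_le_one_right (Real.rpow_nonneg hω p)
    (Real.exp_le_one_iff.2 (by nlinarith [sq_nonneg ω]))

theorem gaussPow_zero (hp : p ≠ 0) : gaussPow p 0 = 0 := by
  rw [gaussPow, Real.zero_rpow hp, zero_mul]

theorem gaussPow_mul_pow (p : ℝ) (hω : 0 < ω) (n : ℕ) :
    gaussPow p ω * ω ^ n = gaussPow (p + n) ω := by
  rw [gaussPow, gaussPow, Real.rpow_add hω, Real.rpow_natCast, mul_right_comm]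

theorem continuous_gaussPow (hp : 0 ≤ p) : Continuous (gaussPow p) := by
  have := Real.continuous_rpow_const hp
  unfold gaussPow
  fun_prop

theorem integrableOn_gaussPow (hp : -1 < p) : IntegrableOn (gaussPow p) (Ioi 0) :=
  integrableOn_rpow_mul_exp_neg_mul_sq one_half_pos hp

theorem tendsto_gaussPow_atTop (p : ℝ) : Tendsto (gaussPow p) atTop (𝓝 0) := by
  refine (rpow_mul_exp_neg_mul_sq_isLittleO_exp_neg one_half_pos p).trans_tendsto ?_
  exact Real.tendsto_exp_atBot.comp (tendsto_id.const_mul_atTop_of_neg (by norm_num))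

theorem hasDerivAt_gaussPow (p : ℝ) (hω : ω ≠ 0) :
    HasDerivAt (gaussPow p) (p * gaussPow (p - 1) ω - gaussPow (p + 1) ω) ω := by
  have hgauss : HasDerivAt (fun ω : ℝ => Real.exp (-(1 / 2) * ω ^ 2))
      (Real.exp (-(1 / 2) * ω ^ 2) * (-ω)) ω := by
    convert ((hasDerivAt_pow 2 ω).const_mul (-(1 / 2) : ℝ)).exp using 2
    ring
  refine ((Real.hasDerivAt_rpow_const (p := p) (Or.inl hω)).mul hgauss).congr_deriv ?_
  rw [gaussPow, gaussPow, Real.rpow_add_one hω]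
  ring

theorem gaussMoment_eq_Gamma (hp : -1 < p) :
    gaussMoment p = (1 / 2 : ℝ) ^ (-(p + 1) / 2) * (1 / 2) * Real.Gamma ((p + 1) / 2) := by
  simpa only [gaussMoment, gaussPow, Real.rpow_two] using
    integral_rpow_mul_exp_neg_mul_rpow (p := 2) (b := 1 / 2) two_pos hp one_half_pos

theorem gaussMoment_pos (hp : -1 < p) : 0 < gaussMoment p := by
  have := Real.Gamma_pos_of_pos (s := (p + 1) / 2) (by linarith)
  rw [gaussMoment_eq_Gamma hp]
  positivity

theorem gaussMoment_add_two (hp : -1 < p) : gaussMoment (p + 2) = (p + 1) * gaussMoment p := by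
  rw [gaussMoment_eq_Gamma hp, gaussMoment_eq_Gamma (by linarith),
    show (p + 2 + 1) / 2 = (p + 1) / 2 + 1 by ring, Real.Gamma_add_one (by linarith),
    show -(p + 2 + 1) / 2 = -(p + 1) / 2 - 1 by ring, Real.rpow_sub_one (by norm_num)]
  ring

theorem gaussMoment_add_two_mul (hp : -1 < p) (n : ℕ) :
    gaussMoment (p + 2 * n) =
      (∏ k ∈ Finset.range n, (p + 2 * (k : ℝ) + 1)) * gaussMoment p := by
  induction n with
  | zero => simp
  | succ n ih =>
    rw [Finset.prod_range_succ, Nat.cast_succ, mul_add_one, ← add_assoc,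
      gaussMoment_add_two (by linarith [n.cast_nonneg (α := ℝ)]), ih]
    ring

theorem integrableOn_gaussPow_mul_exp (hp : -1 < p) (b : ℝ) :
    IntegrableOn (fun ω => gaussPow p ω * Real.exp (b * ω)) (Ioi 0) := by
  have hmaj := (integrableOn_rpow_mul_exp_neg_mul_sq (b := 1 / 4) (by norm_num) hp).const_mul
    (Real.exp (b ^ 2))
  refine hmaj.mono' ((measurable_gaussPow p).mul (by fun_prop)).aestronglyMeasurable ?_
  filter_upwards [ae_restrict_mem measurableSet_Ioi] with ω (hω : 0 < ω)
  have hexp : Real.exp (-(1 / 2) * ω ^ 2) * Real.exp (b * ω) ≤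
      Real.exp (b ^ 2) * Real.exp (-(1 / 4) * ω ^ 2) := by
    rw [← Real.exp_add, ← Real.exp_add, Real.exp_le_exp]
    nlinarith [sq_nonneg (ω / 2 - b)]
  rw [Real.norm_of_nonneg (mul_nonneg (gaussPow_nonneg p hω.le) (Real.exp_nonneg _))]
  calc gaussPow p ω * Real.exp (b * ω)
      = ω ^ p * (Real.exp (-(1 / 2) * ω ^ 2) * Real.exp (b * ω)) := mul_assoc _ _ _
    _ ≤ ω ^ p * (Real.exp (b ^ 2) * Real.exp (-(1 / 4) * ω ^ 2)) := by gcongr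
    _ = Real.exp (b ^ 2) * (ω ^ p * Real.exp (-(1 / 4) * ω ^ 2)) := mul_left_comm _ _ _

end GaussPow

section GaussTransform

open Set
open Complex (I)
open scoped ComplexConjugate

/-- The one-sided transform `∫₀^∞ ω ^ p * e^{-ω²/2} * e^{ixω} dω`, whose real and imaginary parts
are multiples of `Λ^e_p` and `Λ^o_p`. -/
noncomputable def gaussTransform (p x : ℝ) : ℂ :=
  ∫ ω in Ioi 0, (gaussPow p ω : ℂ) * Complex.exp (I * x * ω)

variable {p : ℝ}

theorem gaussTransform_neg (p x : ℝ) : gaussTransform p (-x) = conj (gaussTransform p x) := by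
  rw [gaussTransform, gaussTransform, ← integral_conj]
  congr with ω
  simp [← Complex.exp_conj]

theorem norm_gaussPow_mul_cexp (p x : ℝ) {ω : ℝ} (hω : 0 ≤ ω) :
    ‖(gaussPow p ω : ℂ) * Complex.exp (I * x * ω)‖ = gaussPow p ω := by
  rw [norm_mul_cexp_I_mul, Complex.norm_real, Real.norm_of_nonneg (gaussPow_nonneg p hω)]

theorem integrableOn_gaussPow_mul_cexp (hp : -1 < p) (x : ℝ) :
    IntegrableOn (fun ω : ℝ => (gaussPow p ω : ℂ) * Complex.exp (I * x * ω)) (Ioi 0) :=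
  integrable_mul_cexp_I_mul (integrableOn_gaussPow hp).ofReal x

theorem norm_gaussTransform_le (p x : ℝ) : ‖gaussTransform p x‖ ≤ gaussMoment p :=
  (norm_integral_le_integral_norm _).trans_eq <|
    setIntegral_congr_fun measurableSet_Ioi fun _ hω => norm_gaussPow_mul_cexp p x (le_of_lt hω)

theorem continuous_gaussTransform (hp : -1 < p) : Continuous (gaussTransform p) := by
  refine continuous_of_dominated (bound := gaussPow p)
    (fun x => (integrableOn_gaussPow_mul_cexp hp x).aestronglyMeasurable) (fun x => ?_)
    (integrableOn_gaussPow hp) (ae_of_all _ fun ω => by fun_prop)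
  filter_upwards [ae_restrict_mem measurableSet_Ioi] with ω hω
  exact (norm_gaussPow_mul_cexp p x (le_of_lt hω)).le

theorem hasSum_gaussTransform (hp : -1 < p) (x : ℝ) :
    HasSum (fun n : ℕ => (I * x) ^ n / n.factorial * gaussMoment (p + n)) (gaussTransform p x) := by
  have hexp (z : ℂ) : HasSum (fun n : ℕ => z ^ n / n.factorial) (Complex.exp z) := by
    simpa only [Complex.exp_eq_exp_ℂ] using NormedSpace.expSeries_div_hasSum_exp z
  have hexp_real (b : ℝ) : HasSum (fun n : ℕ => b ^ n / n.factorial) (Real.exp b) := by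
    simpa only [Real.exp_eq_exp_ℝ] using NormedSpace.expSeries_div_hasSum_exp b
  have hterm (n : ℕ) {ω : ℝ} (hω : 0 < ω) :
      (I * x) ^ n / n.factorial * (gaussPow (p + n) ω : ℂ) =
        gaussPow p ω * ((I * x * ω) ^ n / n.factorial) := by
    rw [← gaussPow_mul_pow p hω]
    push_cast
    ring
  have hintegral (n : ℕ) : ∫ ω in Ioi 0, (I * x) ^ n / n.factorial * (gaussPow (p + n) ω : ℂ) =
      (I * x) ^ n / n.factorial * gaussMoment (p + n) := by
    rw [integral_const_mul, integral_complex_ofReal, gaussMoment]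
  simp only [← hintegral]
  refine hasSum_integral_of_dominated_convergence
    (fun n ω => gaussPow p ω * ((|x| * ω) ^ n / n.factorial)) (fun n => ?_) (fun n => ?_)
    (ae_of_all _ fun ω => (hexp_real (|x| * ω)).summable.mul_left _) ?_ ?_
  · have := measurable_gaussPow (p + n)
    fun_prop
  · filter_upwards [ae_restrict_mem measurableSet_Ioi] with ω (hω : 0 < ω)
    rw [hterm n hω]
    simp [abs_of_nonneg (gaussPow_nonneg p hω.le), abs_of_pos hω]
  · simpa only [tsum_mul_left, (hexp_real _).tsum_eq, IntegrableOn] using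
      integrableOn_gaussPow_mul_exp hp |x|
  · filter_upwards [ae_restrict_mem measurableSet_Ioi] with ω hω
    simpa only [hterm _ hω] using (hexp (I * x * ω)).mul_left (gaussPow p ω : ℂ)

theorem ofReal_sqrt_two_pi_ne_zero : (√(2 * π) : ℂ) ≠ 0 :=
  Complex.ofReal_ne_zero.2 (Real.sqrt_pos.2 Real.two_pi_pos).ne'

theorem tsum_even_gaussTransform (hp : -1 < p) (x : ℝ) :
    ∑' n : ℕ, (I * x) ^ (2 * n) / (2 * n).factorial * gaussMoment (p + (2 * n : ℕ)) =
      √(2 * π) * (gaussMoment p * LamE p x) := by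
  have hterm (n : ℕ) : (I * x) ^ (2 * n) / (2 * n).factorial * gaussMoment (p + (2 * n : ℕ)) =
      gaussMoment p * (((-1) ^ n * (∏ k ∈ Finset.range n, (p + 2 * (k : ℝ) + 1)) *
        x ^ (2 * n) / (2 * n).factorial : ℝ) : ℂ) := by
    rw [Nat.cast_mul, Nat.cast_two, gaussMoment_add_two_mul hp, mul_pow, pow_mul I 2, Complex.I_sq]
    push_cast
    ring
  have hsqrt := ofReal_sqrt_two_pi_ne_zero
  simp only [hterm, tsum_mul_left, ← Complex.ofReal_tsum]
  rw [LamE, Complex.ofReal_mul, Complex.ofReal_div, Complex.ofReal_one]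
  field_simp

theorem tsum_odd_gaussTransform (hp : -1 < p) (x : ℝ) :
    ∑' n : ℕ, (I * x) ^ (2 * n + 1) / (2 * n + 1).factorial * gaussMoment (p + (2 * n + 1 : ℕ)) =
      √(2 * π) * (I * (gaussMoment (p + 1) * LamO p x)) := by
  have hmoment (n : ℕ) : gaussMoment (p + (2 * n + 1 : ℕ)) =
      (∏ k ∈ Finset.range n, (p + 2 * ((k : ℝ) + 1))) * gaussMoment (p + 1) := by
    rw [show p + (2 * n + 1 : ℕ) = p + 1 + 2 * n by push_cast; ring,
      gaussMoment_add_two_mul (by linarith)]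
    congr! 2
    ring
  have hterm (n : ℕ) :
      (I * x) ^ (2 * n + 1) / (2 * n + 1).factorial * gaussMoment (p + (2 * n + 1 : ℕ)) =
      I * gaussMoment (p + 1) * (((-1) ^ n * (∏ k ∈ Finset.range n, (p + 2 * ((k : ℝ) + 1))) *
        x ^ (2 * n + 1) / (2 * n + 1).factorial : ℝ) : ℂ) := by
    rw [hmoment, mul_pow, pow_succ I, pow_mul I 2, Complex.I_sq]
    push_cast
    ring
  have hsqrt := ofReal_sqrt_two_pi_ne_zero
  simp only [hterm, tsum_mul_left, ← Complex.ofReal_tsum]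
  rw [LamO, Complex.ofReal_mul, Complex.ofReal_div, Complex.ofReal_one]
  field_simp

theorem gaussTransform_eq_LamE_add_LamO (hp : -1 < p) (x : ℝ) :
    gaussTransform p x = √(2 * π) *
      (gaussMoment p * LamE p x + I * (gaussMoment (p + 1) * LamO p x)) := by
  have hseries := hasSum_gaussTransform hp x
  rw [← hseries.tsum_eq, ← tsum_even_add_odd
      (f := fun n : ℕ => (I * x) ^ n / n.factorial * gaussMoment (p + n))
      (hseries.summable.comp_injective fun m n h => by simpa using h)
      (hseries.summable.comp_injective fun m n h => by simpa using h),
    tsum_even_gaussTransform hp, tsum_odd_gaussTransform hp, mul_add]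

end GaussTransform

section Decay

open Set Asymptotics
open Complex (I)

variable {p s : ℝ}

theorem I_mul_gaussTransform (hp : 0 < p) (x : ℝ) :
    I * x * gaussTransform p x = gaussTransform (p + 1) x - p * gaussTransform (p - 1) x := by
  have hlower : IntegrableOn (gaussPow (p - 1)) (Ioi 0) := integrableOn_gaussPow (by linarith)
  have hupper : IntegrableOn (gaussPow (p + 1)) (Ioi 0) := integrableOn_gaussPow (by linarith)
  have hparts := I_mul_integral_Ioi_mul_cexp (h := fun ω => (gaussPow p ω : ℂ)) x
    (Complex.continuous_ofReal.comp (continuous_gaussPow hp.le)).continuousWithinAt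
    (fun ω (hω : 0 < ω) => (hasDerivAt_gaussPow p hω.ne').ofReal_comp)
    (integrableOn_gaussPow (by linarith)).ofReal ((hlower.const_mul p).sub hupper).ofReal
  rw [gaussTransform, hparts, gaussPow_zero hp.ne']
  simp only [Complex.ofReal_sub, Complex.ofReal_mul, sub_mul, mul_assoc (p : ℂ)]
  rw [integral_sub ((integrableOn_gaussPow_mul_cexp (by linarith) x).const_mul (p : ℂ))
    (integrableOn_gaussPow_mul_cexp (by linarith) x), integral_const_mul, ← gaussTransform,
    ← gaussTransform]
  simp

theorem gaussTransform_isBigO_of_sub_one_of_add_one {r : ℝ} (hp : 0 < p)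
    (hlower : gaussTransform (p - 1) =O[atTop] fun x : ℝ => x ^ (-r))
    (hupper : gaussTransform (p + 1) =O[atTop] fun x : ℝ => x ^ (-r)) :
    gaussTransform p =O[atTop] fun x : ℝ => x ^ (-(r + 1)) := by
  have hinv : (fun x : ℝ => (I * x)⁻¹) =O[atTop] fun x : ℝ => x ^ (-1 : ℝ) :=
    .of_bound' (Eventually.of_forall fun x => by simp [Real.rpow_neg_one])
  refine (hinv.mul (hupper.sub (hlower.const_mul_left p))).congr' ?_ ?_
  · filter_upwards [eventually_ne_atTop 0] with x hx
    rw [← I_mul_gaussTransform hp, inv_mul_cancel_left₀]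
    exact mul_ne_zero Complex.I_ne_zero (Complex.ofReal_ne_zero.2 hx)
  · filter_upwards [eventually_gt_atTop 0] with x hx
    rw [← Real.rpow_add hx]
    ring_nf

theorem norm_setIntegral_Ioc_gaussPow_mul_cexp_le (hs : -1 < s) (x : ℝ) {δ : ℝ} (hδ : 0 ≤ δ) :
    ‖∫ ω in Ioc 0 δ, (gaussPow s ω : ℂ) * Complex.exp (I * x * ω)‖ ≤ δ ^ (s + 1) / (s + 1) := by
  have hrpow : ∫ ω in Ioc 0 δ, ω ^ s = δ ^ (s + 1) / (s + 1) := by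
    rw [← intervalIntegral.integral_of_le hδ, integral_rpow (Or.inl hs),
      Real.zero_rpow (by linarith), sub_zero]
  rw [← hrpow]
  refine norm_integral_le_of_norm_le
    ((intervalIntegrable_iff_integrableOn_Ioc_of_le hδ).1
      (intervalIntegral.intervalIntegrable_rpow' hs)) ?_
  filter_upwards [ae_restrict_mem measurableSet_Ioc] with ω hω
  exact (norm_gaussPow_mul_cexp s x hω.1.le).trans_le (gaussPow_le_rpow s hω.1.le)

theorem norm_setIntegral_Ioi_gaussPow_mul_cexp_le (hs : -1 < s) (hs' : s ≤ 0) {x δ : ℝ}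
    (hx : x ≠ 0) (hδ : 0 < δ) :
    ‖∫ ω in Ioi δ, (gaussPow s ω : ℂ) * Complex.exp (I * x * ω)‖ ≤ 2 * δ ^ s / |x| := by
  have hneg (ω : ℝ) (hω : δ < ω) : s * gaussPow (s - 1) ω - gaussPow (s + 1) ω ≤ 0 :=
    sub_nonpos_of_le <|
      (mul_nonpos_of_nonpos_of_nonneg hs' (gaussPow_nonneg _ (hδ.trans hω).le)).trans
        (gaussPow_nonneg _ (hδ.trans hω).le)
  have htail := norm_integral_Ioi_mul_cexp_le_of_deriv_nonpos hx
    (fun ω (hω : δ ≤ ω) => hasDerivAt_gaussPow s (hδ.trans_le hω).ne') hneg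
    ((integrableOn_gaussPow hs).mono_set (Ioi_subset_Ioi hδ.le)) (tendsto_gaussPow_atTop s)
  grw [htail, gaussPow_le_rpow s hδ.le]

theorem norm_gaussTransform_le_rpow (hs : -1 < s) (hs' : s ≤ 0) {x : ℝ} (hx : 0 < x) :
    ‖gaussTransform s x‖ ≤ ((s + 1)⁻¹ + 2) * x ^ (-(s + 1)) := by
  have hint := integrableOn_gaussPow_mul_cexp hs x
  have hδ : 0 < x⁻¹ := inv_pos.2 hx
  have hsplit : gaussTransform s x =
      (∫ ω in Ioc 0 x⁻¹, (gaussPow s ω : ℂ) * Complex.exp (I * x * ω)) +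
        ∫ ω in Ioi x⁻¹, (gaussPow s ω : ℂ) * Complex.exp (I * x * ω) := by
    rw [gaussTransform, ← Ioc_union_Ioi_eq_Ioi hδ.le, setIntegral_union
      (Ioc_disjoint_Ioi le_rfl) measurableSet_Ioi (hint.mono_set Ioc_subset_Ioi_self)
      (hint.mono_set (Ioi_subset_Ioi hδ.le))]
  have hpow : x⁻¹ ^ s / x = x ^ (-(s + 1)) := by
    rw [Real.inv_rpow hx.le, neg_add, ← sub_eq_add_neg, Real.rpow_sub_one hx.ne',
      Real.rpow_neg hx.le]
  have hpow' : x⁻¹ ^ (s + 1) = x ^ (-(s + 1)) := by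
    rw [Real.inv_rpow hx.le, Real.rpow_neg hx.le]
  calc ‖gaussTransform s x‖
      ≤ x⁻¹ ^ (s + 1) / (s + 1) + 2 * x⁻¹ ^ s / |x| := by
        rw [hsplit]
        exact norm_add_le_of_le (norm_setIntegral_Ioc_gaussPow_mul_cexp_le hs x hδ.le)
          (norm_setIntegral_Ioi_gaussPow_mul_cexp_le hs hs' hx.ne' hδ)
    _ = ((s + 1)⁻¹ + 2) * x ^ (-(s + 1)) := by
        rw [abs_of_pos hx, mul_div_assoc, hpow, hpow']
        ring

theorem rpow_neg_isBigO_rpow_neg {q r : ℝ} (h : q ≤ r) :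
    (fun x : ℝ => x ^ (-r)) =O[atTop] fun x : ℝ => x ^ (-q) :=
  .of_bound' <| (eventually_ge_atTop 1).mono fun x hx => by
    rw [Real.norm_of_nonneg (by positivity), Real.norm_of_nonneg (by positivity)]
    exact Real.rpow_le_rpow_of_exponent_le hx (neg_le_neg h)

theorem gaussTransform_isBigO_rpow_neg_one (hp : 0 < p) :
    gaussTransform p =O[atTop] fun x : ℝ => x ^ (-1 : ℝ) := by
  have hbdd (q : ℝ) : gaussTransform q =O[atTop] fun x : ℝ => x ^ (-0 : ℝ) :=
    .of_bound (gaussMoment q) (Eventually.of_forall fun x => by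
      simpa using norm_gaussTransform_le q x)
  simpa only [zero_add] using
    gaussTransform_isBigO_of_sub_one_of_add_one hp (hbdd (p - 1)) (hbdd (p + 1))

theorem gaussTransform_isBigO_rpow_neg_min (hs : -1 < s) :
    gaussTransform s =O[atTop] fun x : ℝ => x ^ (-min (s + 1) 1) := by
  rcases le_or_gt s 0 with hs' | hs'
  · rw [min_eq_left (by linarith)]
    refine .of_bound ((s + 1)⁻¹ + 2) ?_
    filter_upwards [eventually_gt_atTop 0] with x hx
    rw [Real.norm_of_nonneg (Real.rpow_nonneg hx.le _)]
    exact norm_gaussTransform_le_rpow hs hs' hx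
  · rw [min_eq_right (by linarith)]
    exact gaussTransform_isBigO_rpow_neg_one hs'

theorem gaussTransform_isBigO_rpow_neg_min_add_one (hp : 0 < p) :
    gaussTransform p =O[atTop] fun x : ℝ => x ^ (-(min p 1 + 1)) := by
  refine gaussTransform_isBigO_of_sub_one_of_add_one hp ?_ ?_
  · simpa only [sub_add_cancel] using gaussTransform_isBigO_rpow_neg_min (s := p - 1) (by linarith)
  · exact (gaussTransform_isBigO_rpow_neg_one (by linarith)).trans
      (rpow_neg_isBigO_rpow_neg (min_le_right p 1))

theorem integrable_gaussTransform (hp : 0 < p) : Integrable (gaussTransform p) := by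
  refine LocallyIntegrable.integrable_of_isBigO_atTop_of_norm_isNegInvariant
    (continuous_gaussTransform (by linarith)).locallyIntegrable (ae_of_all _ fun x => ?_)
    (gaussTransform_isBigO_rpow_neg_min_add_one hp) (integrableAtFilter_rpow_atTop_iff.2 ?_)
  · simp [gaussTransform_neg]
  · linarith [lt_min hp one_pos]

end Decay

section FourierOfKernels

open Set
open Complex (I)

variable {p : ℝ}

theorem gaussPow_posPart_add_gaussPow_negPart (hp : p ≠ 0) (ω : ℝ) :
    gaussPow p ω⁺ + gaussPow p ω⁻ = gaussPow p |ω| := by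
  rcases le_total 0 ω with hω | hω
  · rw [posPart_of_nonneg hω, negPart_of_nonneg hω, abs_of_nonneg hω, gaussPow_zero hp, add_zero]
  · rw [posPart_of_nonpos hω, negPart_of_nonpos hω, abs_of_nonpos hω, gaussPow_zero hp, zero_add]

theorem gaussPow_posPart_sub_gaussPow_negPart (hp : p ≠ 0) (ω : ℝ) :
    gaussPow p ω⁺ - gaussPow p ω⁻ = Real.sign ω * gaussPow p |ω| := by
  rcases lt_trichotomy ω 0 with hω | rfl | hω
  · rw [posPart_of_nonpos hω.le, negPart_of_nonpos hω.le, abs_of_neg hω, gaussPow_zero hp,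
      Real.sign_of_neg hω, zero_sub, neg_one_mul]
  · simp
  · rw [posPart_of_nonneg hω.le, negPart_of_nonneg hω.le, abs_of_pos hω, gaussPow_zero hp,
      Real.sign_of_pos hω, sub_zero, one_mul]

theorem gaussPow_posPart_eq_indicator (hp : p ≠ 0) :
    (fun ω : ℝ => gaussPow p ω⁺) = (Ioi 0).indicator (gaussPow p) := by
  ext ω
  rcases lt_or_ge 0 ω with hω | hω
  · rw [indicator_of_mem (mem_Ioi.2 hω), posPart_of_nonneg hω.le]
  · rw [indicator_of_notMem (notMem_Ioi.2 hω), posPart_of_nonpos hω, gaussPow_zero hp]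

theorem gaussTransform_eq_angularFourier (hp : p ≠ 0) (x : ℝ) :
    gaussTransform p x = angularFourier (fun ω => (gaussPow p ω⁺ : ℂ)) (-x) := by
  rw [gaussTransform, angularFourier, ← integral_indicator measurableSet_Ioi]
  congr with ω
  rw [congrFun (gaussPow_posPart_eq_indicator hp) ω]
  by_cases hω : ω ∈ Ioi 0 <;> simp [hω]

theorem angularFourier_gaussTransform (hp : 0 < p) (ω : ℝ) :
    angularFourier (gaussTransform p) ω = 2 * π * gaussPow p ω⁺ := by
  have hcont : Continuous fun ω : ℝ => (gaussPow p ω⁺ : ℂ) :=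
    Complex.continuous_ofReal.comp ((continuous_gaussPow hp.le).comp continuous_posPart)
  have hint : Integrable fun ω : ℝ => gaussPow p ω⁺ := by
    rw [gaussPow_posPart_eq_indicator hp.ne', integrable_indicator_iff measurableSet_Ioi]
    exact integrableOn_gaussPow (by linarith)
  have htransform : gaussTransform p =
      fun x => angularFourier (fun ω => (gaussPow p ω⁺ : ℂ)) (-x) :=
    funext (gaussTransform_eq_angularFourier hp.ne')
  rw [htransform]
  exact angularFourier_inversion hcont hint.ofReal (htransform ▸ integrable_gaussTransform hp) ω

theorem gaussTransform_neg_eq_LamE_sub_LamO (hp : -1 < p) (x : ℝ) :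
    gaussTransform p (-x) = √(2 * π) *
      (gaussMoment p * LamE p x - I * (gaussMoment (p + 1) * LamO p x)) := by
  rw [gaussTransform_neg, gaussTransform_eq_LamE_add_LamO hp]
  simp [sub_eq_add_neg]

theorem LamE_eq_gaussTransform (hp : -1 < p) (x : ℝ) :
    (LamE p x : ℂ) = (2 * √(2 * π) * gaussMoment p : ℂ)⁻¹ * gaussTransform p x +
      (2 * √(2 * π) * gaussMoment p : ℂ)⁻¹ * gaussTransform p (-x) := by
  have hsqrt := ofReal_sqrt_two_pi_ne_zero
  have hmoment : (gaussMoment p : ℂ) ≠ 0 := by exact_mod_cast (gaussMoment_pos hp).ne'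
  rw [gaussTransform_eq_LamE_add_LamO hp, gaussTransform_neg_eq_LamE_sub_LamO hp]
  field_simp
  ring

theorem LamO_eq_gaussTransform (hp : -1 < p) (x : ℝ) :
    (LamO p x : ℂ) = (2 * I * √(2 * π) * gaussMoment (p + 1) : ℂ)⁻¹ * gaussTransform p x +
      -(2 * I * √(2 * π) * gaussMoment (p + 1) : ℂ)⁻¹ * gaussTransform p (-x) := by
  have hsqrt := ofReal_sqrt_two_pi_ne_zero
  have hmoment : (gaussMoment (p + 1) : ℂ) ≠ 0 := by
    exact_mod_cast (gaussMoment_pos (by linarith)).ne'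
  rw [gaussTransform_eq_LamE_add_LamO hp, gaussTransform_neg_eq_LamE_sub_LamO hp]
  field_simp
  ring

theorem integrable_LamE (hp : 0 < p) : Integrable fun x => (LamE p x : ℂ) := by
  have hg := integrable_gaussTransform hp
  simp only [LamE_eq_gaussTransform (neg_one_lt_zero.trans hp)]
  exact (hg.const_mul _).add (hg.comp_neg.const_mul _)

theorem integrable_LamO (hp : 0 < p) : Integrable fun x => (LamO p x : ℂ) := by
  have hg := integrable_gaussTransform hp
  simp only [LamO_eq_gaussTransform (neg_one_lt_zero.trans hp)]
  exact (hg.const_mul _).add (hg.comp_neg.const_mul _)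

theorem angularFourier_gaussTransform_combination (hp : 0 < p) (a b : ℂ) (ω : ℝ) :
    angularFourier (fun x => a * gaussTransform p x + b * gaussTransform p (-x)) ω =
      2 * π * (a * gaussPow p ω⁺ + b * gaussPow p ω⁻) := by
  have hg := integrable_gaussTransform hp
  rw [angularFourier_add (hg.const_mul a) (hg.comp_neg.const_mul b), angularFourier_const_mul,
    angularFourier_const_mul, angularFourier_comp_neg, angularFourier_gaussTransform hp,
    angularFourier_gaussTransform hp, posPart_neg]
  ring

theorem ofReal_sqrt_two_pi_sq : (√(2 * π) : ℂ) ^ 2 = 2 * π := by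
  exact_mod_cast Real.sq_sqrt Real.two_pi_pos.le

theorem angularFourier_LamE (hp : 0 < p) (ω : ℝ) :
    angularFourier (fun x => (LamE p x : ℂ)) ω =
      (√(2 * π) / (2 * gaussMoment p) : ℝ) * gaussPow p |ω| := by
  simp only [LamE_eq_gaussTransform (neg_one_lt_zero.trans hp)]
  rw [angularFourier_gaussTransform_combination hp, ← mul_add, ← Complex.ofReal_add,
    gaussPow_posPart_add_gaussPow_negPart hp.ne', ← ofReal_sqrt_two_pi_sq]
  push_cast
  field_simp

theorem angularFourier_LamO (hp : 0 < p) (ω : ℝ) :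
    angularFourier (fun x => (LamO p x : ℂ)) ω =
      I * (-√(2 * π) / (2 * gaussMoment (p + 1)) : ℝ) * Real.sign ω * gaussPow p |ω| := by
  simp only [LamO_eq_gaussTransform (neg_one_lt_zero.trans hp)]
  rw [angularFourier_gaussTransform_combination hp, neg_mul, ← sub_eq_add_neg, ← mul_sub,
    ← Complex.ofReal_sub, gaussPow_posPart_sub_gaussPow_negPart hp.ne', ← ofReal_sqrt_two_pi_sq]
  push_cast
  field_simp
  rw [Complex.I_sq]
  ring

end FourierOfKernels

section Dilation

open Complex (I)

variable {ρ : ℝ}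

theorem integrable_const_mul_comp_mul_right {f : ℝ → ℝ} (hf : Integrable fun x => (f x : ℂ))
    (hρ : ρ ≠ 0) (a : ℝ) : Integrable fun x => ((a * f (x * ρ) : ℝ) : ℂ) := by
  simpa only [Complex.ofReal_mul] using (hf.comp_mul_right' hρ).const_mul (a : ℂ)

theorem angularFourier_rpow_mul_comp_mul_right (f : ℝ → ℝ) (hρ : 0 < ρ) (p ω : ℝ) :
    angularFourier (fun x => ((ρ ^ (p + 1) * f (x * ρ) : ℝ) : ℂ)) ω =
      (ρ ^ p : ℝ) * angularFourier (fun x => (f x : ℂ)) (ω / ρ) := by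
  have hpow : ρ ^ (p + 1) * |ρ|⁻¹ = ρ ^ p := by
    rw [Real.rpow_add_one hρ.ne', abs_of_pos hρ, mul_inv_cancel_right₀ hρ.ne']
  simp only [Complex.ofReal_mul]
  rw [angularFourier_const_mul, angularFourier_comp_mul_right (fun x => (f x : ℂ)) hρ.ne',
    ← mul_assoc, ← Complex.ofReal_mul, hpow]

theorem rpow_mul_gaussPow_abs_div (hρ : 0 < ρ) (p ω : ℝ) :
    ρ ^ p * gaussPow p |ω / ρ| = |ω| ^ p * Real.exp (-ω ^ 2 / (2 * ρ ^ 2)) := by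
  rw [gaussPow, abs_div, abs_of_pos hρ, Real.div_rpow (abs_nonneg ω) hρ.le, div_pow, sq_abs,
    ← mul_assoc, mul_div_cancel₀ _ (Real.rpow_pos_of_pos hρ p).ne']
  ring_nf

theorem sign_div_of_pos (hρ : 0 < ρ) (ω : ℝ) : Real.sign (ω / ρ) = Real.sign ω := by
  simp only [Real.sign, div_lt_iff₀ hρ, zero_mul, div_pos_iff_of_pos_right hρ]

theorem angularFourier_rpow_mul_LamE {p : ℝ} (hp : 0 < p) (hρ : 0 < ρ) (ω : ℝ) :
    angularFourier (fun x => ((ρ ^ (p + 1) * LamE p (x * ρ) : ℝ) : ℂ)) ω =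
      (√(2 * π) / (2 * gaussMoment p) : ℝ) * (|ω| ^ p : ℝ) *
        (Real.exp (-ω ^ 2 / (2 * ρ ^ 2)) : ℝ) := by
  rw [angularFourier_rpow_mul_comp_mul_right _ hρ, angularFourier_LamE hp, mul_left_comm,
    ← Complex.ofReal_mul (ρ ^ p), rpow_mul_gaussPow_abs_div hρ, Complex.ofReal_mul, mul_assoc]

theorem angularFourier_rpow_mul_LamO {p : ℝ} (hp : 0 < p) (hρ : 0 < ρ) (ω : ℝ) :
    angularFourier (fun x => ((ρ ^ (p + 1) * LamO p (x * ρ) : ℝ) : ℂ)) ω =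
      I * (-√(2 * π) / (2 * gaussMoment (p + 1)) : ℝ) * Real.sign ω * (|ω| ^ p : ℝ) *
        (Real.exp (-ω ^ 2 / (2 * ρ ^ 2)) : ℝ) := by
  rw [angularFourier_rpow_mul_comp_mul_right _ hρ, angularFourier_LamO hp, mul_left_comm,
    ← Complex.ofReal_mul (ρ ^ p), rpow_mul_gaussPow_abs_div hρ, sign_div_of_pos hρ,
    Complex.ofReal_mul (|ω| ^ p), mul_assoc _ (Complex.ofReal (|ω| ^ p))]

end Dilation

/-- Fourier transforms of the scaled kernels `g^e_p(x,ρ) = ρ^{p+1}Λ^e_p(xρ)` and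
`g^o_p(x,ρ) = ρ^{p+1}Λ^o_p(xρ)`: there are nonzero constants `c, d` (independent of `ρ` and `ω`)
with `𝓕(g^e_p(·,ρ))(ω) = c|ω|^p e^{-ω²/(2ρ²)}`, `𝓕(g^o_p(·,ρ))(ω) = i d sign(ω)|ω|^p e^{-ω²/(2ρ²)}`,
and the corresponding convolution identities `𝓕(f * g^θ_p(·,ρ)) = 𝓕(g^θ_p(·,ρ)) · 𝓕f`. -/
theorem stmt_15 (p : ℝ) (hp : 0 < p) :
    ∃ c : ℝ, c ≠ 0 ∧ ∃ d : ℝ, d ≠ 0 ∧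
      ∀ ρ : ℝ, 0 < ρ →
        (∀ ω : ℝ,
          (∫ x : ℝ, ((ρ ^ (p + 1) * LamE p (x * ρ) : ℝ) : ℂ) *
              Complex.exp (-(Complex.I * ω * x))) =
            (c : ℂ) * ((|ω| ^ p : ℝ) : ℂ) * ((Real.exp (-ω ^ 2 / (2 * ρ ^ 2)) : ℝ) : ℂ) ∧
          (∫ x : ℝ, ((ρ ^ (p + 1) * LamO p (x * ρ) : ℝ) : ℂ) *
              Complex.exp (-(Complex.I * ω * x))) =
            Complex.I * (d : ℂ) * ((Real.sign ω : ℝ) : ℂ) * ((|ω| ^ p : ℝ) : ℂ) *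
              ((Real.exp (-ω ^ 2 / (2 * ρ ^ 2)) : ℝ) : ℂ)) ∧
        ∀ f : ℝ → ℂ, Integrable f → ∀ ω : ℝ,
          (∫ x : ℝ, (∫ v : ℝ, f v * ((ρ ^ (p + 1) * LamE p ((x - v) * ρ) : ℝ) : ℂ)) *
              Complex.exp (-(Complex.I * ω * x))) =
            (c : ℂ) * ((|ω| ^ p : ℝ) : ℂ) * ((Real.exp (-ω ^ 2 / (2 * ρ ^ 2)) : ℝ) : ℂ) *
              (∫ x : ℝ, f x * Complex.exp (-(Complex.I * ω * x))) ∧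
          (∫ x : ℝ, (∫ v : ℝ, f v * ((ρ ^ (p + 1) * LamO p ((x - v) * ρ) : ℝ) : ℂ)) *
              Complex.exp (-(Complex.I * ω * x))) =
            Complex.I * (d : ℂ) * ((Real.sign ω : ℝ) : ℂ) * ((|ω| ^ p : ℝ) : ℂ) *
              ((Real.exp (-ω ^ 2 / (2 * ρ ^ 2)) : ℝ) : ℂ) *
              (∫ x : ℝ, f x * Complex.exp (-(Complex.I * ω * x))) := by
  have hsqrt : 0 < √(2 * π) := Real.sqrt_pos.2 Real.two_pi_pos
  have heven : 0 < gaussMoment p := gaussMoment_pos (by linarith)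
  have hodd : 0 < gaussMoment (p + 1) := gaussMoment_pos (by linarith)
  refine ⟨√(2 * π) / (2 * gaussMoment p), by positivity, -√(2 * π) / (2 * gaussMoment (p + 1)),
    div_ne_zero (neg_ne_zero.2 hsqrt.ne') (by positivity), fun ρ hρ => ?_⟩
  have hE := angularFourier_rpow_mul_LamE hp hρ
  have hO := angularFourier_rpow_mul_LamO hp hρ
  refine ⟨fun ω => ⟨hE ω, hO ω⟩, fun f hf ω => ⟨?_, ?_⟩⟩
  · rw [← hE]
    exact angularFourier_convolution hf
      (integrable_const_mul_comp_mul_right (integrable_LamE hp) hρ.ne' _) ω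
  · rw [← hO]
    exact angularFourier_convolution hf
      (integrable_const_mul_comp_mul_right (integrable_LamO hp) hρ.ne' _) ω
end

section
/- Let p > 0 and let m be an integer with m > p + 2. Let f : ℝ → ℂ be m times continuously differentiable with f^{(n)} ∈ L¹(ℝ) for every 0 ≤ n ≤ m. Then for θ ∈ {e,o} and for every ε > 0 there exist T > 0 and Q > 0 such that |φ^θ_p(x,ρ)| < ε for all x ∈ ℝ and ρ > 0 satisfying |x| > T or ρ < Q. -/
open MeasureTheory Real

/-- The even frequency-domain multiplier `(iω)^p + (-iω)^p` (principal branch;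
`0^p = 0` for `p > 0`). -/
noncomputable def kerE (p ω : ℝ) : ℂ :=
  (Complex.I * ω) ^ (p : ℂ) + (-(Complex.I * ω)) ^ (p : ℂ)

/-- The odd frequency-domain multiplier `(iω)^p - (-iω)^p`. -/
noncomputable def kerO (p ω : ℝ) : ℂ :=
  (Complex.I * ω) ^ (p : ℂ) - (-(Complex.I * ω)) ^ (p : ℂ)

/-- `φ^e_p(x,ρ) = (1/2π) ∫ F(ω)((iω)^p + (-iω)^p) e^{-ω²/(2ρ²)} e^{iωx} dω`. -/
noncomputable def phiE (F : ℝ → ℂ) (p x ρ : ℝ) : ℂ :=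
  (1 / (2 * (Real.pi : ℂ))) *
    ∫ ω : ℝ, F ω * kerE p ω * ((Real.exp (-ω ^ 2 / (2 * ρ ^ 2)) : ℝ) : ℂ) *
      Complex.exp (Complex.I * ω * x)

/-- `φ^o_p(x,ρ) = (1/2π) ∫ F(ω)((iω)^p - (-iω)^p) e^{-ω²/(2ρ²)} e^{iωx} dω`. -/
noncomputable def phiO (F : ℝ → ℂ) (p x ρ : ℝ) : ℂ :=
  (1 / (2 * (Real.pi : ℂ))) *
    ∫ ω : ℝ, F ω * kerO p ω * ((Real.exp (-ω ^ 2 / (2 * ρ ^ 2)) : ℝ) : ℂ) *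
      Complex.exp (Complex.I * ω * x)

open Filter Topology FourierTransform
open scoped NNReal

/-!
With `G = F · k`, where `k` is either multiplier, `φ(x, ρ)` is, up to the factor `1 / (2π)`, the
Fourier transform of `e^{-tω²} G(ω)` at `-x / (2π)`, where `t = 1 / (2ρ²)`. The condition
"`|x| > T` or `ρ < Q`" describes the complement of a compact set in the half-plane of points
`(t, x)` with `t ≥ 0`, so the claim is that `φ` vanishes at infinity there.

The `m` integrable derivatives of `f` make `F(ω)` bounded and `O(|ω|^{-m})`, hence `G` is
integrable. By dominated convergence `t ↦ e^{-tω²} G` is then continuous into `L¹` and tends to `0`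
as `t → ∞`, so the corresponding Fourier transforms depend on `t` continuously in the uniform norm.
Each of them vanishes at infinity by the Riemann–Lebesgue lemma, and compactness of bounded
`t`-intervals makes this uniform in `t`.
-/

section VanishingAtInfinity

variable {X Y α : Type*} [UniformSpace α] {Φ : X → Y → α} {φ : Y → α} {c : α}

theorem tendsto_prod_of_tendstoUniformly {l : Filter X} {l' : Filter Y}
    (hΦ : TendstoUniformly Φ φ l) (hφ : Tendsto φ l' (𝓝 c)) :
    Tendsto (fun z : X × Y ↦ Φ z.1 z.2) (l ×ˢ l') (𝓝 c) := by
  rw [Uniform.tendsto_nhds_right] at hφ ⊢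
  have hΦ' := (tendstoUniformly_iff_tendsto.1 hΦ).mono_left (prod_mono_right l (le_top (a := l')))
  exact (hφ.comp tendsto_snd).uniformity_trans hΦ'

theorem tendsto_cocompact_prod_of_tendstoUniformly [TopologicalSpace X] [TopologicalSpace Y]
    (hcont : ∀ s, TendstoUniformly Φ (Φ s) (𝓝 s))
    (hX : TendstoUniformly Φ (fun _ ↦ c) (cocompact X))
    (hY : ∀ s, Tendsto (Φ s) (cocompact Y) (𝓝 c)) :
    Tendsto (fun z : X × Y ↦ Φ z.1 z.2) (cocompact (X × Y)) (𝓝 c) := by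
  rw [← coprod_cocompact]
  refine Tendsto.coprod_of_prod_top_right (fun s hs ↦ ?_) (tendsto_prod_top_iff.2 hX)
  obtain ⟨K, hK, hKs⟩ := mem_cocompact.1 hs
  have hsK : 𝓟 sᶜ ≤ 𝓝ˢ K :=
    (principal_mono.2 (Set.compl_subset_comm.1 hKs)).trans principal_le_nhdsSet
  refine Tendsto.mono_left ?_ (prod_mono_left _ hsK)
  simp only [hK.nhdsSet_prod_eq_biSup, tendsto_iSup]
  exact fun x _ ↦ tendsto_prod_of_tendstoUniformly (hcont x) (hY x)

end VanishingAtInfinity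

section GaussianDamp

variable {V E : Type*} [NormedAddCommGroup V] [NormedAddCommGroup E] [NormedSpace ℂ E]

/-- The Gaussian cutoff `e^{-t‖v‖²} f(v)` of `f`. The parameter `t` plays the role of
`1 / (2ρ²)`; it ranges over `ℝ≥0` so that `t = 0`, i.e. `ρ = ∞`, is allowed. -/
noncomputable def gaussianDamp (f : V → E) (t : ℝ≥0) (v : V) : E :=
  (Real.exp (-t * ‖v‖ ^ 2) : ℂ) • f v

theorem norm_gaussianDamp_le (f : V → E) (t : ℝ≥0) (v : V) : ‖gaussianDamp f t v‖ ≤ ‖f v‖ := by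
  have hexp : Real.exp (-t * ‖v‖ ^ 2) ≤ 1 :=
    Real.exp_le_one_iff.2 (mul_nonpos_of_nonpos_of_nonneg (by simp) (by positivity))
  rw [gaussianDamp, norm_smul, Complex.norm_real, Real.norm_of_nonneg (Real.exp_pos _).le]
  exact mul_le_of_le_one_left (norm_nonneg _) hexp

theorem continuous_gaussianDamp (f : V → E) (v : V) : Continuous fun t ↦ gaussianDamp f t v := by
  unfold gaussianDamp
  fun_prop

theorem tendsto_gaussianDamp_atTop (f : V → E) {v : V} (hv : v ≠ 0) :
    Tendsto (fun t ↦ gaussianDamp f t v) atTop (𝓝 0) := by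
  have hexp : Tendsto (fun t : ℝ≥0 ↦ Real.exp (-t * ‖v‖ ^ 2)) atTop (𝓝 0) := by
    refine Real.tendsto_exp_atBot.comp (Tendsto.atBot_mul_const (by positivity) ?_)
    exact tendsto_neg_atTop_atBot.comp (NNReal.tendsto_coe_atTop.2 tendsto_id)
  simpa [gaussianDamp] using ((Complex.continuous_ofReal.tendsto 0).comp hexp).smul_const (f v)

theorem aestronglyMeasurable_gaussianDamp [MeasurableSpace V] [OpensMeasurableSpace V]
    {μ : Measure V} {f : V → E} (hf : AEStronglyMeasurable f μ) (t : ℝ≥0) :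
    AEStronglyMeasurable (gaussianDamp f t) μ :=
  (Continuous.aestronglyMeasurable (by fun_prop)).smul hf

end GaussianDamp

section Fourier

variable {V E : Type*} [NormedAddCommGroup V] [InnerProductSpace ℝ V] [FiniteDimensional ℝ V]
  [MeasurableSpace V] [BorelSpace V] [NormedAddCommGroup E] [NormedSpace ℂ E]

theorem norm_fourier_le_integral_norm (f : V → E) (ξ : V) : ‖𝓕 f ξ‖ ≤ ∫ v, ‖f v‖ :=
  VectorFourier.norm_fourierIntegral_le_integral_norm _ _ _ _ _

theorem continuous_fourier {f : V → E} (hf : Integrable f) : Continuous (𝓕 f) :=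
  VectorFourier.fourierIntegral_continuous Real.continuous_fourierChar continuous_inner hf

theorem fourier_sub {f g : V → E} (hf : Integrable f) (hg : Integrable g) :
    𝓕 (f - g) = 𝓕 f - 𝓕 g := by
  ext ξ
  simp only [Real.fourier_eq, Pi.sub_apply, smul_sub]
  exact integral_sub ((Real.fourierIntegral_convergent_iff ξ).2 hf)
    ((Real.fourierIntegral_convergent_iff ξ).2 hg)

theorem tendstoUniformly_fourier_of_tendsto_integral_norm_sub {ι : Type*} {l : Filter ι}
    {f : ι → V → E} {g : V → E} (hf : ∀ᶠ i in l, Integrable (f i)) (hg : Integrable g)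
    (hfg : Tendsto (fun i ↦ ∫ v, ‖f i v - g v‖) l (𝓝 0)) :
    TendstoUniformly (fun i ↦ 𝓕 (f i)) (𝓕 g) l := by
  rw [Metric.tendstoUniformly_iff]
  intro ε hε
  filter_upwards [hf, hfg.eventually_lt_const hε] with i hi hiε ξ
  calc dist (𝓕 g ξ) (𝓕 (f i) ξ) = ‖𝓕 (f i - g) ξ‖ := by
        rw [fourier_sub hi hg, dist_comm, dist_eq_norm, Pi.sub_apply]
    _ ≤ ∫ v, ‖f i v - g v‖ := norm_fourier_le_integral_norm _ _
    _ < ε := hiε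

theorem tendstoUniformly_fourier_of_dominated {ι : Type*} {l : Filter ι} [l.IsCountablyGenerated]
    {f : ι → V → E} {g : V → E} (bound : V → ℝ)
    (hf_meas : ∀ i, AEStronglyMeasurable (f i)) (hf_bound : ∀ i, ∀ᵐ v, ‖f i v‖ ≤ bound v)
    (hbound : Integrable bound) (hg : Integrable g)
    (hlim : ∀ᵐ v, Tendsto (fun i ↦ f i v) l (𝓝 (g v))) :
    TendstoUniformly (fun i ↦ 𝓕 (f i)) (𝓕 g) l := by
  refine tendstoUniformly_fourier_of_tendsto_integral_norm_sub
    (.of_forall fun i ↦ hbound.mono' (hf_meas i) (hf_bound i)) hg ?_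
  rw [← integral_zero V ℝ]
  refine tendsto_integral_filter_of_dominated_convergence (fun v ↦ bound v + ‖g v‖)
    (.of_forall fun i ↦ ((hf_meas i).sub hg.1).norm) (.of_forall fun i ↦ ?_)
    (hbound.add hg.norm) ?_
  · filter_upwards [hf_bound i] with v hv
    rw [norm_norm]
    exact (norm_sub_le _ _).trans (by gcongr)
  · filter_upwards [hlim] with v hv
    exact tendsto_iff_norm_sub_tendsto_zero.1 hv

theorem tendsto_fourier_gaussianDamp_cocompact [Nontrivial V] {f : V → E} (hf : Integrable f) :
    Tendsto (fun z : ℝ≥0 × V ↦ 𝓕 (gaussianDamp f z.1) z.2) (cocompact (ℝ≥0 × V)) (𝓝 0) := by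
  have hmeas := aestronglyMeasurable_gaussianDamp hf.1
  have hbound (t : ℝ≥0) := ae_of_all volume (norm_gaussianDamp_le f t)
  refine tendsto_cocompact_prod_of_tendstoUniformly (Φ := fun t ↦ 𝓕 (gaussianDamp f t))
    (fun s ↦ ?_) ?_ fun s ↦ tendsto_integral_exp_inner_smul_cocompact _
  · exact tendstoUniformly_fourier_of_dominated _ hmeas hbound hf.norm
      (hf.norm.mono' (hmeas s) (hbound s))
      (ae_of_all _ fun v ↦ (continuous_gaussianDamp f v).tendsto s)
  · have hlim : ∀ᵐ v : V, Tendsto (fun t ↦ gaussianDamp f t v) atTop (𝓝 0) := by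
      filter_upwards [Measure.ae_ne volume 0] with v hv using tendsto_gaussianDamp_atTop f hv
    have hzero : 𝓕 (0 : V → E) = fun _ ↦ 0 := by ext; simp [Real.fourier_eq]
    rw [cocompact_eq_atTop, ← hzero]
    exact tendstoUniformly_fourier_of_dominated _ hmeas hbound hf.norm (integrable_zero _ _ _) hlim

end Fourier

section FourierDecay

variable {E : Type*} [NormedAddCommGroup E] [NormedSpace ℂ E]

theorem abs_two_pi_mul_pow_mul_norm_fourier_le {f : ℝ → E} {N n : ℕ} (hf : ContDiff ℝ N f)
    (hint : ∀ k ≤ N, Integrable (iteratedDeriv k f)) (hn : n ≤ N) (ξ : ℝ) :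
    |2 * π * ξ| ^ n * ‖𝓕 f ξ‖ ≤ ∫ x, ‖iteratedDeriv n f x‖ := by
  have hderiv : 𝓕 (iteratedDeriv n f) ξ = (2 * π * Complex.I * ξ) ^ n • 𝓕 f ξ :=
    congrFun (Real.fourier_iteratedDeriv (N := N) (mod_cast hf)
      (fun k hk ↦ hint k (mod_cast hk)) (mod_cast hn)) ξ
  calc |2 * π * ξ| ^ n * ‖𝓕 f ξ‖ = ‖𝓕 (iteratedDeriv n f) ξ‖ := by
        rw [hderiv, norm_smul, norm_pow]; simp [abs_mul]
    _ ≤ _ := norm_fourier_le_integral_norm _ _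

theorem integral_mul_cexp_neg_eq_fourier (f : ℝ → ℂ) (ω : ℝ) :
    ∫ x, f x * Complex.exp (-(Complex.I * ω * x)) = 𝓕 f (ω / (2 * π)) := by
  rw [Real.fourier_real_eq_integral_exp_smul]
  refine integral_congr_ae (ae_of_all _ fun x ↦ ?_)
  have hphase : -2 * π * x * (ω / (2 * π)) = -(ω * x) := by field_simp
  simp only [hphase, smul_eq_mul, mul_comm (f x)]
  congr 2
  push_cast
  ring

end FourierDecay

section Integrability

variable {V : Type*} [NormedAddCommGroup V] [NormedSpace ℝ V] [FiniteDimensional ℝ V]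
  [Nontrivial V] [MeasurableSpace V] [BorelSpace V] {μ : Measure V} [μ.IsAddHaarMeasure]

theorem integrable_norm_rpow_mul_min {p r : ℝ} (hp : -Module.finrank ℝ V < p)
    (hr : p + Module.finrank ℝ V < r) :
    Integrable (fun v : V ↦ ‖v‖ ^ p * min 1 (‖v‖ ^ (-r))) μ := by
  rw [integrable_fun_norm_addHaar μ (f := fun y ↦ y ^ p * min 1 (y ^ (-r))),
    ← Set.Ioc_union_Ioi_eq_Ioi zero_le_one]
  set d := Module.finrank ℝ V
  have hd : ((d - 1 : ℕ) : ℝ) = d - 1 := by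
    rw [Nat.cast_pred Module.finrank_pos]
  have hpow {y : ℝ} (hy : 0 < y) : y ^ (d - 1) * y ^ p = y ^ (d - 1 + p : ℝ) := by
    rw [← Real.rpow_natCast, hd, ← Real.rpow_add hy]
  refine IntegrableOn.union ?_ ?_
  · have hnear : IntegrableOn (fun y : ℝ ↦ y ^ (d - 1 + p : ℝ)) (Set.Ioc 0 1) :=
      (intervalIntegral.intervalIntegrable_rpow' (by linarith)).1
    refine hnear.congr_fun (fun y hy ↦ ?_) measurableSet_Ioc
    have hmin : min 1 (y ^ (-r)) = 1 :=
      min_eq_left (Real.one_le_rpow_of_pos_of_le_one_of_nonpos hy.1 hy.2 (by linarith))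
    simp only [hmin, mul_one, smul_eq_mul, hpow hy.1]
  · have hfar : IntegrableOn (fun y : ℝ ↦ y ^ (d - 1 + p + -r : ℝ)) (Set.Ioi 1) :=
      integrableOn_Ioi_rpow_of_lt (by linarith) one_pos
    refine hfar.congr_fun (fun y hy ↦ ?_) measurableSet_Ioi
    have hmin : min 1 (y ^ (-r)) = y ^ (-r) :=
      min_eq_right (Real.rpow_le_one_of_one_le_of_nonpos (le_of_lt hy) (by linarith))
    have hy0 : 0 < y := one_pos.trans hy
    beta_reduce
    rw [Real.rpow_add hy0, ← hpow hy0, hmin, smul_eq_mul, mul_assoc]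

theorem integrable_mul_of_decay {R : Type*} [NormedRing R] {p r A B C : ℝ} {F k : V → R}
    (hp : -Module.finrank ℝ V < p) (hr : p + Module.finrank ℝ V < r)
    (hF : AEStronglyMeasurable F μ) (hk : AEStronglyMeasurable k μ)
    (hFA : ∀ v, ‖F v‖ ≤ A) (hFB : ∀ v, ‖v‖ ^ r * ‖F v‖ ≤ B) (hkC : ∀ v, ‖k v‖ ≤ C * ‖v‖ ^ p) :
    Integrable (fun v ↦ F v * k v) μ := by
  have hdecay {v : V} (hv : v ≠ 0) : ‖F v‖ ≤ max A B * min 1 (‖v‖ ^ (-r)) := by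
    have hA : 0 ≤ max A B := ((norm_nonneg _).trans (hFA 0)).trans (le_max_left A B)
    have hvr : 0 < ‖v‖ ^ r := Real.rpow_pos_of_pos (norm_pos_iff.2 hv) r
    rw [mul_min_of_nonneg _ _ hA, mul_one, Real.rpow_neg (norm_nonneg v), ← div_eq_mul_inv]
    refine le_min ((hFA v).trans (le_max_left A B)) ((le_div_iff₀' hvr).2 ?_)
    exact (hFB v).trans (le_max_right A B)
  refine ((integrable_norm_rpow_mul_min hp hr).const_mul (max A B * C)).mono' (hF.mul hk) ?_
  filter_upwards [Measure.ae_ne μ 0] with v hv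
  calc ‖F v * k v‖ ≤ ‖F v‖ * ‖k v‖ := norm_mul_le _ _
    _ ≤ (max A B * min 1 (‖v‖ ^ (-r))) * (C * ‖v‖ ^ p) :=
        mul_le_mul (hdecay hv) (hkC v) (norm_nonneg _) ((norm_nonneg _).trans (hdecay hv))
    _ = max A B * C * (‖v‖ ^ p * min 1 (‖v‖ ^ (-r))) := by ring

end Integrability

section Multipliers

theorem norm_I_mul_cpow (p ω : ℝ) : ‖(Complex.I * ω) ^ (p : ℂ)‖ = |ω| ^ p := by
  simp [Complex.norm_cpow_real]

theorem norm_neg_I_mul_cpow (p ω : ℝ) : ‖(-(Complex.I * ω)) ^ (p : ℂ)‖ = |ω| ^ p := by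
  simp [Complex.norm_cpow_real]

theorem norm_kerE_le (p ω : ℝ) : ‖kerE p ω‖ ≤ 2 * |ω| ^ p := by
  simpa only [kerE, norm_I_mul_cpow, norm_neg_I_mul_cpow, ← two_mul] using
    norm_add_le ((Complex.I * ω) ^ (p : ℂ)) ((-(Complex.I * ω)) ^ (p : ℂ))

theorem norm_kerO_le (p ω : ℝ) : ‖kerO p ω‖ ≤ 2 * |ω| ^ p := by
  simpa only [kerO, norm_I_mul_cpow, norm_neg_I_mul_cpow, ← two_mul] using
    norm_sub_le ((Complex.I * ω) ^ (p : ℂ)) ((-(Complex.I * ω)) ^ (p : ℂ))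

theorem measurable_kerE (p : ℝ) : Measurable (kerE p) := by
  unfold kerE
  fun_prop

theorem measurable_kerO (p : ℝ) : Measurable (kerO p) := by
  unfold kerO
  fun_prop

theorem integrable_fourier_mul {p : ℝ} (hp : -1 < p) {m : ℕ} (hm : p + 1 < m) {f : ℝ → ℂ}
    (hf : ContDiff ℝ m f) (hint : ∀ n ≤ m, Integrable (iteratedDeriv n f)) {k : ℝ → ℂ} {C : ℝ}
    (hk : Measurable k) (hkC : ∀ ω, ‖k ω‖ ≤ C * |ω| ^ p) :
    Integrable fun ω ↦ 𝓕 f (ω / (2 * π)) * k ω := by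
  have hf0 : Integrable f := by simpa using hint 0 m.zero_le
  have hcont : Continuous fun ω : ℝ ↦ 𝓕 f (ω / (2 * π)) :=
    (continuous_fourier hf0).comp (by fun_prop)
  have hdecay (ω : ℝ) : ‖ω‖ ^ (m : ℝ) * ‖𝓕 f (ω / (2 * π))‖ ≤ ∫ x, ‖iteratedDeriv m f x‖ := by
    have hscale : 2 * π * (ω / (2 * π)) = ω := by field_simp
    simpa only [hscale, Real.norm_eq_abs, Real.rpow_natCast] using
      abs_two_pi_mul_pow_mul_norm_fourier_le hf hint le_rfl (ω / (2 * π))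
  exact integrable_mul_of_decay (by simpa using hp) (by simpa using hm)
    hcont.aestronglyMeasurable hk.aestronglyMeasurable
    (fun ω ↦ norm_fourier_le_integral_norm _ _) hdecay hkC

theorem integral_mul_gaussian_mul_cexp_eq_fourier_gaussianDamp (G : ℝ → ℂ) (x ρ : ℝ) :
    ∫ ω : ℝ, G ω * ((Real.exp (-ω ^ 2 / (2 * ρ ^ 2)) : ℝ) : ℂ) * Complex.exp (Complex.I * ω * x) =
      𝓕 (gaussianDamp G (1 / (2 * ρ ^ 2)).toNNReal) (-x / (2 * π)) := by
  rw [← integral_mul_cexp_neg_eq_fourier]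
  refine integral_congr_ae (ae_of_all _ fun ω ↦ ?_)
  have ht : ((1 / (2 * ρ ^ 2)).toNNReal : ℝ) = 1 / (2 * ρ ^ 2) :=
    Real.coe_toNNReal _ (by positivity)
  have hgauss : -ω ^ 2 / (2 * ρ ^ 2) = -(1 / (2 * ρ ^ 2)) * ‖ω‖ ^ 2 := by
    rw [Real.norm_eq_abs, sq_abs]; ring
  have hphase : Complex.I * ω * x = -(Complex.I * ((-x : ℝ) : ℂ) * ω) := by push_cast; ring
  beta_reduce
  rw [gaussianDamp, smul_eq_mul, mul_comm (G ω), ht, hgauss, hphase]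

end Multipliers

theorem exists_radius_of_eventually_cocompact {V : Type*} [SeminormedAddCommGroup V]
    [ProperSpace V] {P : ℝ≥0 × V → Prop} (hP : ∀ᶠ z in cocompact (ℝ≥0 × V), P z) :
    ∃ R : ℝ, 0 < R ∧ ∀ (t : ℝ≥0) (v : V), R < t ∨ R < ‖v‖ → P (t, v) := by
  rw [← coprod_cocompact, Filter.coprod, eventually_sup, eventually_comap, eventually_comap,
    cocompact_eq_atTop, ← Metric.cobounded_eq_cocompact, ← comap_norm_atTop, eventually_comap] at hP
  obtain ⟨t₀, ht₀⟩ := eventually_atTop.1 hP.1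
  obtain ⟨R₀, hR₀⟩ := eventually_atTop.1 hP.2
  refine ⟨max (max t₀ R₀) 1, by positivity, fun t v h ↦ ?_⟩
  simp only [max_lt_iff] at h
  rcases h with ht | hv
  · exact ht₀ t (mod_cast ht.1.1.le) _ rfl
  · exact hR₀ _ hv.1.2.le v rfl _ rfl

theorem exists_cutoffs_of_eventually_cocompact {P : ℝ≥0 × ℝ → Prop}
    (hP : ∀ᶠ z in cocompact (ℝ≥0 × ℝ), P z) :
    ∃ T : ℝ, 0 < T ∧ ∃ Q : ℝ, 0 < Q ∧ ∀ x ρ : ℝ, 0 < ρ → (T < |x| ∨ ρ < Q) →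
      P ((1 / (2 * ρ ^ 2)).toNNReal, -x / (2 * π)) := by
  obtain ⟨R, hR, hRP⟩ := exists_radius_of_eventually_cocompact hP
  refine ⟨R * (2 * π), by positivity, √(1 / (2 * R)), by positivity, fun x ρ hρ h ↦ hRP _ _ ?_⟩
  refine h.symm.imp (fun hρQ ↦ ?_) fun hxT ↦ ?_
  · rw [Real.lt_sqrt hρ.le, lt_div_iff₀ (by positivity)] at hρQ
    rw [Real.coe_toNNReal _ (by positivity), lt_div_iff₀ (by positivity)]
    linarith
  · rwa [norm_div, norm_neg, Real.norm_eq_abs, Real.norm_of_nonneg Real.two_pi_pos.le,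
      lt_div_iff₀ Real.two_pi_pos]

theorem eventually_norm_const_mul_fourier_gaussianDamp_lt {G : ℝ → ℂ} (hG : Integrable G)
    (c : ℂ) {ε : ℝ} (hε : 0 < ε) :
    ∀ᶠ z in cocompact (ℝ≥0 × ℝ), ‖c * 𝓕 (gaussianDamp G z.1) z.2‖ < ε := by
  have hlim := ((tendsto_fourier_gaussianDamp_cocompact hG).const_mul c).norm
  rw [mul_zero, norm_zero] at hlim
  exact hlim.eventually_lt_const hε

theorem stmt_18_general (p : ℝ) (hp : -1 < p) (m : ℕ) (hm : p + 1 < m)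
    (f : ℝ → ℂ) (hf : ContDiff ℝ m f)
    (hint : ∀ n ≤ m, Integrable (iteratedDeriv n f))
    (F : ℝ → ℂ) (hF : ∀ ω : ℝ, F ω = ∫ x : ℝ, f x * Complex.exp (-(Complex.I * ω * x))) :
    ∀ ε : ℝ, 0 < ε → ∃ T : ℝ, 0 < T ∧ ∃ Q : ℝ, 0 < Q ∧
      ∀ x ρ : ℝ, 0 < ρ → (T < |x| ∨ ρ < Q) →
        ‖phiE F p x ρ‖ < ε ∧ ‖phiO F p x ρ‖ < ε := by
  intro ε hε
  obtain rfl : F = fun ω ↦ 𝓕 f (ω / (2 * π)) :=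
    funext fun ω ↦ (hF ω).trans (integral_mul_cexp_neg_eq_fourier f ω)
  have hE := integrable_fourier_mul hp hm hf hint (measurable_kerE p) (norm_kerE_le p)
  have hO := integrable_fourier_mul hp hm hf hint (measurable_kerO p) (norm_kerO_le p)
  simp only [phiE, phiO, integral_mul_gaussian_mul_cexp_eq_fourier_gaussianDamp]
  exact exists_cutoffs_of_eventually_cocompact
    ((eventually_norm_const_mul_fourier_gaussianDamp_lt hE _ hε).and
      (eventually_norm_const_mul_fourier_gaussianDamp_lt hO _ hε))

/-- Essential localization: for `p > 0` and `m > p + 2`, for every `ε > 0` there are `T > 0` and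
`Q > 0` such that `|φ^θ_p(x,ρ)| < ε` whenever `|x| > T` or `ρ < Q` (θ = e, o). -/
theorem stmt_18 (p : ℝ) (hp : 0 < p) (m : ℕ) (hm : (m : ℝ) > p + 2)
    (f : ℝ → ℂ) (hf : ContDiff ℝ m f)
    (hint : ∀ n ≤ m, Integrable (iteratedDeriv n f))
    (F : ℝ → ℂ) (hF : ∀ ω : ℝ, F ω = ∫ x : ℝ, f x * Complex.exp (-(Complex.I * ω * x))) :
    ∀ ε : ℝ, 0 < ε → ∃ T : ℝ, 0 < T ∧ ∃ Q : ℝ, 0 < Q ∧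
      ∀ x ρ : ℝ, 0 < ρ → (T < |x| ∨ ρ < Q) →
        ‖phiE F p x ρ‖ < ε ∧ ‖phiO F p x ρ‖ < ε :=
  stmt_18_general p (by linarith) m (by linarith) f hf hint F hF
end
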